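/- Let W, J1, J2, X1, X2, Y, Z be random variables with values in finite sets on a common probability space. Suppose Z is a deterministic function of X2, Z is also a deterministic function of the pair (Y, X1), the Markov chain X2 − J2 − (X1, J1) holds in the sense that H(X2 | (J1, J2, X1)) = H(X2 | J2), and the Markov chain W − (J1, J2) − Y holds in the sense that I(W; Y | (J1, J2)) = 0. Then I(W; Y) ≤ H(Y) − H(X2 | J2) + H(X2 | Z). -/

import Mathlib

/-!
Write `J = (J1, J2)` and `A = (J1, J2, X1)`. The chain `W − J − Y` gives
`I(W; Y) ≤ I(J; Y) = H(Y) - H(Y | J)`, and `H(Y | J) ≥ H(Y | A) ≥ H(Z | A)` because conditioning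
reduces entropy and `Z` is a function of `(Y, X1)`. Finally
`H(X2 | J2) = H(X2 | A) ≤ H(X2, Z | A) = H(Z | A) + H(X2 | Z, A) ≤ H(Z | A) + H(X2 | Z)`,
so that `H(Z | A) ≥ H(X2 | J2) - H(X2 | Z)`.

Every step is an instance of one of two facts: entropy does not increase when passing to a function
of a random variable (`H_le_of_isDetFnOf`), and entropy is submodular (`H_submodular`), that is,
conditional mutual information is nonnegative.
-/


/-!
Shannon entropy, conditional entropy, and mutual information for discrete random
variables defined on a common probability space modelled by a `PMF`.
The logarithm is the natural logarithm and `0 log 0 = 0` (via `Real.negMulLog`).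
-/

namespace DiamondWiretap

/-- Shannon entropy `H(X)` of a random variable `X` on the probability space `(Ω, p)`. -/
noncomputable def H {Ω S : Type*} (p : PMF Ω) (X : Ω → S) : ℝ :=
  ∑' s : S, Real.negMulLog ((p.map X) s).toReal

/-- Joint entropy `H(X, Y)`. -/
noncomputable def H2 {Ω S T : Type*} (p : PMF Ω) (X : Ω → S) (Y : Ω → T) : ℝ :=
  H p (fun ω => (X ω, Y ω))

/-- Conditional entropy `H(X | Y) = H(X, Y) - H(Y)`. -/
noncomputable def condEnt {Ω S T : Type*} (p : PMF Ω) (X : Ω → S) (Y : Ω → T) : ℝ :=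
  H2 p X Y - H p Y

/-- Mutual information `I(X; Y) = H(X) + H(Y) - H(X, Y)`. -/
noncomputable def mutInfo {Ω S T : Type*} (p : PMF Ω) (X : Ω → S) (Y : Ω → T) : ℝ :=
  H p X + H p Y - H2 p X Y

/-- Conditional mutual information `I(X; Y | Z) = H(X,Z) + H(Y,Z) - H(X,Y,Z) - H(Z)`. -/
noncomputable def condMutInfo {Ω S T U : Type*} (p : PMF Ω)
    (X : Ω → S) (Y : Ω → T) (Z : Ω → U) : ℝ :=
  H2 p X Z + H2 p Y Z - H p (fun ω => (X ω, Y ω, Z ω)) - H p Z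

/-- `Z` is almost surely a deterministic function of `X`,
i.e. `Z = φ ∘ X` on the support of `p` for some function `φ`. -/
def IsDetFnOf {Ω S T : Type*} (p : PMF Ω) (Z : Ω → T) (X : Ω → S) : Prop :=
  ∃ φ : S → T, ∀ ω ∈ p.support, Z ω = φ (X ω)

end DiamondWiretap

open DiamondWiretap

namespace DiamondWiretap

open Finset

/-- Real-valued distribution of `X`. -/
noncomputable def prob {Ω S : Type*} (p : PMF Ω) (X : Ω → S) (s : S) : ℝ :=
  ((p.map X) s).toReal

lemma prob_nonneg {Ω S : Type*} (p : PMF Ω) (X : Ω → S) (s : S) : 0 ≤ prob p X s :=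
  ENNReal.toReal_nonneg

lemma H_eq_sum {Ω S : Type*} [Fintype S] (p : PMF Ω) (X : Ω → S) :
    H p X = -∑ s, prob p X s * Real.log (prob p X s) := by
  simp [H, prob, Real.negMulLog, tsum_fintype]

lemma map_eq_of_eq_on_support {Ω S : Type*} (p : PMF Ω) {X X' : Ω → S}
    (h : ∀ ω ∈ p.support, X ω = X' ω) : p.map X = p.map X' := by
  classical
  ext s
  simp only [PMF.map_apply]
  refine tsum_congr fun ω => ?_
  by_cases hω : ω ∈ p.support
  · rw [h ω hω]
  · simp [(p.apply_eq_zero_iff ω).2 hω]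

open Classical in
/-- The law of `φ ∘ Y` is the push-forward of the law of `Y`, even when `Ω` is infinite. -/
lemma prob_comp {Ω S T : Type*} [Fintype S] (p : PMF Ω) (Y : Ω → S) (φ : S → T) (t : T) :
    prob p (fun ω => φ (Y ω)) t = ∑ s, if t = φ s then prob p Y s else 0 := by
  have h : p.map (fun ω => φ (Y ω)) = (p.map Y).map φ := (PMF.map_comp Y p φ).symm
  rw [prob, h, PMF.map_apply, tsum_fintype, ENNReal.toReal_sum]
  · refine sum_congr rfl fun s _ => ?_
    split_ifs <;> simp [prob]
  · intro s _
    split_ifs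
    · exact PMF.apply_ne_top _ _
    · simp

/-- Change of variables for the expectation of `g (φ (Y))`. -/
lemma sum_prob_comp {Ω S T : Type*} [Fintype S] [Fintype T] (p : PMF Ω) (Y : Ω → S) (φ : S → T)
    (g : T → ℝ) :
    ∑ t, prob p (fun ω => φ (Y ω)) t * g t = ∑ s, prob p Y s * g (φ s) := by
  classical
  simp only [prob_comp, sum_mul, ite_mul, zero_mul]
  rw [sum_comm]
  simp

lemma prob_le_prob_comp {Ω S T : Type*} [Fintype S] (p : PMF Ω) (Y : Ω → S) (φ : S → T) (s : S) :
    prob p Y s ≤ prob p (fun ω => φ (Y ω)) (φ s) := by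
  classical
  rw [prob_comp p Y φ]
  calc prob p Y s = if φ s = φ s then prob p Y s else 0 := by simp
    _ ≤ _ := single_le_sum (f := fun s' => if φ s = φ s' then prob p Y s' else 0)
        (fun s' _ => by split_ifs <;> simp [prob_nonneg]) (mem_univ s)

/-- The entropy of `φ (Y)` as an expectation over `Y`. -/
lemma H_comp {Ω S T : Type*} [Fintype S] [Fintype T] (p : PMF Ω) (Y : Ω → S) (φ : S → T) :
    H p (fun ω => φ (Y ω)) =
      -∑ s, prob p Y s * Real.log (prob p (fun ω => φ (Y ω)) (φ s)) := by
  rw [H_eq_sum, sum_prob_comp p Y φ (fun t => Real.log (prob p (fun ω => φ (Y ω)) t))]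

/-- An event `Y = s` is contained in `φ (Y) = φ s`, so the surprisal can only decrease. -/
lemma H_le_of_isDetFnOf {Ω S T : Type*} [Fintype S] [Fintype T] (p : PMF Ω) {X : Ω → T}
    {Y : Ω → S} (h : IsDetFnOf p X Y) : H p X ≤ H p Y := by
  obtain ⟨φ, hφ⟩ := h
  have hX : H p X = H p (fun ω => φ (Y ω)) := by
    simp only [H, map_eq_of_eq_on_support p hφ]
  rw [hX, H_comp, H_eq_sum p Y, neg_le_neg_iff]
  refine sum_le_sum fun s _ => ?_
  rcases (prob_nonneg p Y s).eq_or_lt with h0 | h0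
  · simp [← h0]
  · exact mul_le_mul_of_nonneg_left (Real.log_le_log h0 (prob_le_prob_comp p Y φ s)) h0.le

lemma sum_prob_pair {Ω S T : Type*} [Fintype S] [Fintype T] (p : PMF Ω) (X : Ω → S) (Y : Ω → T)
    (t : T) : ∑ s, prob p (fun ω => (X ω, Y ω)) (s, t) = prob p Y t := by
  classical
  have h := prob_comp p (fun ω => (X ω, Y ω)) Prod.snd t
  simp only [Fintype.sum_prod_type] at h
  rw [h]
  simp

/-- Submodularity of entropy, i.e. `0 ≤ I(X; Y | Z)`. It follows from `log u ≤ u - 1` applied to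
`u = P(x, z) P(y, z) / (P(x, y, z) P(z))`. -/
lemma H_submodular {Ω S T U : Type*} [Fintype S] [Fintype T] [Fintype U] (p : PMF Ω)
    (X : Ω → S) (Y : Ω → T) (Z : Ω → U) :
    H p (fun ω => (X ω, Y ω, Z ω)) + H p Z ≤
      H p (fun ω => (X ω, Z ω)) + H p (fun ω => (Y ω, Z ω)) := by
  set V : Ω → S × T × U := fun ω => (X ω, Y ω, Z ω) with hV
  have hZ := H_comp p V (fun v => v.2.2)
  have hXZ := H_comp p V (fun v => (v.1, v.2.2))
  have hYZ := H_comp p V (fun v => v.2)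
  have mZ := prob_le_prob_comp p V (fun v => v.2.2)
  have mXZ := prob_le_prob_comp p V (fun v => (v.1, v.2.2))
  have mYZ := prob_le_prob_comp p V (fun v => v.2)
  simp only [hV] at hZ hXZ hYZ mZ mXZ mYZ
  rw [hZ, hXZ, hYZ, H_eq_sum p V]
  simp only [← hV] at mZ mXZ mYZ ⊢
  set a := prob p (fun ω => (X ω, Z ω))
  set b := prob p (fun ω => (Y ω, Z ω))
  set c := prob p Z
  set r := prob p V
  have hpt : ∀ v : S × T × U,
      r v * Real.log (a (v.1, v.2.2)) + r v * Real.log (b v.2)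
        - r v * Real.log (r v) - r v * Real.log (c v.2.2)
      ≤ a (v.1, v.2.2) * b v.2 / c v.2.2 - r v := by
    intro v
    rcases (prob_nonneg p V v).eq_or_lt with h0 | h0
    · have h0' : r v = 0 := h0.symm
      simp only [h0', zero_mul, add_zero, sub_zero]
      exact div_nonneg (mul_nonneg (prob_nonneg _ _ _) (prob_nonneg _ _ _)) (prob_nonneg _ _ _)
    · have hr : 0 < r v := h0
      have ha : 0 < a (v.1, v.2.2) := hr.trans_le (mXZ v)
      have hb : 0 < b v.2 := hr.trans_le (mYZ v)
      have hc : 0 < c v.2.2 := hr.trans_le (mZ v)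
      have hl := Real.log_le_sub_one_of_pos
        (show 0 < a (v.1, v.2.2) * b v.2 / (r v * c v.2.2) by positivity)
      rw [Real.log_div (by positivity) (by positivity), Real.log_mul ha.ne' hb.ne',
        Real.log_mul hr.ne' hc.ne'] at hl
      have hm := mul_le_mul_of_nonneg_left hl hr.le
      have e : r v * (a (v.1, v.2.2) * b v.2 / (r v * c v.2.2) - 1)
          = a (v.1, v.2.2) * b v.2 / c v.2.2 - r v := by
        field_simp
      rw [e] at hm
      linarith
  have hsum := sum_le_sum fun v (_ : v ∈ (univ : Finset (S × T × U))) => hpt v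
  simp only [sum_add_distrib, sum_sub_distrib] at hsum
  have hr : ∑ v, r v = ∑ u, c u := by
    have := sum_prob_comp p V (fun v => v.2.2) (fun _ => 1)
    simp only [mul_one] at this
    exact this.symm
  have hab : ∑ v : S × T × U, a (v.1, v.2.2) * b v.2 / c v.2.2 = ∑ u, c u := by
    calc ∑ v : S × T × U, a (v.1, v.2.2) * b v.2 / c v.2.2
        = ∑ y, ∑ u, ∑ x, a (x, u) * b (y, u) / c u := by
          rw [Fintype.sum_prod_type_right, Fintype.sum_prod_type]
      _ = ∑ y, ∑ u, c u * b (y, u) / c u := by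
          simp only [← sum_div, ← sum_mul, a, c, sum_prob_pair]
      _ = ∑ u, c u * c u / c u := by
          rw [sum_comm]
          simp only [← sum_div, ← mul_sum, b, c, sum_prob_pair]
      _ = ∑ u, c u := by simp
  linarith

end DiamondWiretap

/-- If `Z` is a deterministic function of `X2` and also of `(Y, X1)`,
the Markov chain `X2 − J2 − (X1, J1)` holds, and the Markov chain `W − (J1, J2) − Y`
holds (`I(W; Y | (J1, J2)) = 0`), then `I(W; Y) ≤ H(Y) − H(X2 | J2) + H(X2 | Z)`. -/
theorem stmt3 {Ω SW SJ1 SJ2 S1 S2 T U : Type*}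
    [Fintype SW] [Fintype SJ1] [Fintype SJ2] [Fintype S1] [Fintype S2]
    [Fintype T] [Fintype U]
    (p : PMF Ω) (W : Ω → SW) (J1 : Ω → SJ1) (J2 : Ω → SJ2)
    (X1 : Ω → S1) (X2 : Ω → S2) (Y : Ω → T) (Z : Ω → U)
    (hZ1 : IsDetFnOf p Z X2)
    (hZ2 : IsDetFnOf p Z (fun ω => (Y ω, X1 ω)))
    (hMarkov : condEnt p X2 (fun ω => (J1 ω, J2 ω, X1 ω)) = condEnt p X2 J2)
    (hMarkovW : condMutInfo p W Y (fun ω => (J1 ω, J2 ω)) = 0) :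
    mutInfo p W Y ≤ H p Y - condEnt p X2 J2 + condEnt p X2 Z := by
  -- `I(J; Y | W) ≥ 0`
  have h1 := H_submodular p (fun ω => (J1 ω, J2 ω)) Y W
  have e1 : H p (fun ω => ((J1 ω, J2 ω), W ω)) ≤ H p (fun ω => (W ω, J1 ω, J2 ω)) :=
    H_le_of_isDetFnOf p ⟨fun v => (v.2, v.1), fun _ _ => rfl⟩
  have e2 : H p (fun ω => (Y ω, W ω)) ≤ H p (fun ω => (W ω, Y ω)) :=
    H_le_of_isDetFnOf p ⟨fun v => (v.2, v.1), fun _ _ => rfl⟩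
  have e3 : H p (fun ω => (W ω, Y ω, J1 ω, J2 ω)) ≤ H p (fun ω => ((J1 ω, J2 ω), Y ω, W ω)) :=
    H_le_of_isDetFnOf p ⟨fun v => (v.2.2, v.2.1, v.1), fun _ _ => rfl⟩
  -- `H(Y | J, X1) ≤ H(Y | J)`
  have h2 := H_submodular p Y X1 (fun ω => (J1 ω, J2 ω))
  have e4 : H p (fun ω => (X1 ω, J1 ω, J2 ω)) ≤ H p (fun ω => (J1 ω, J2 ω, X1 ω)) :=
    H_le_of_isDetFnOf p ⟨fun v => (v.2.2, v.1, v.2.1), fun _ _ => rfl⟩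
  -- `H(Z, A) ≤ H(Y, A)`
  have h3 : H p (fun ω => ((J1 ω, J2 ω, X1 ω), Z ω)) ≤
      H p (fun ω => (Y ω, X1 ω, J1 ω, J2 ω)) := by
    obtain ⟨φ, hφ⟩ := hZ2
    refine H_le_of_isDetFnOf p
      ⟨fun v => ((v.2.2.1, v.2.2.2, v.2.1), φ (v.1, v.2.1)), fun ω hω => ?_⟩
    simp only [hφ ω hω]
  -- `H(X2 | Z, A) ≤ H(X2 | Z)`
  have h4 := H_submodular p X2 (fun ω => (J1 ω, J2 ω, X1 ω)) Z
  have e5 : H p (fun ω => (X2 ω, J1 ω, J2 ω, X1 ω)) ≤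
      H p (fun ω => (X2 ω, (J1 ω, J2 ω, X1 ω), Z ω)) :=
    H_le_of_isDetFnOf p ⟨fun v => (v.1, v.2.1), fun _ _ => rfl⟩
  simp only [condEnt, mutInfo, condMutInfo, H2] at *
  linarith
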